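/- There exists a universal constant K > 0 with the following property. Let C_reg ≥ 0 and let ω = Σ_{k≥1} ω_k, where each ω_k : ℝ² → (−∞,0] is smooth and compactly supported, ω_k = 0 for all sufficiently large k, supp ω_k ⊂ {2^{k−1} ≤ |x| ≤ 2^{k+1}}, and ‖ω_k‖_{S¹₃} ≤ C_reg. Then for all s ∈ ℝ and θ ∈ S¹, |T(Δω)(s,θ) − Σ_{k ≥ 1, 2^{k+1} ≥ |s|} T(Δω_k)(0,θ)| ≤ K · C_reg, where Δ = ∂_{x₁}² + ∂_{x₂}² is the Laplacian on ℝ². -/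

import Mathlib

open MeasureTheory Real

noncomputable section

/-- Directional derivative of a function on `ℝ²` in the direction `v`. -/
def pd (v : ℝ × ℝ) (ψ : ℝ × ℝ → ℝ) : ℝ × ℝ → ℝ := fun p => fderiv ℝ ψ p v

/-- The Laplacian `Δ = ∂_{x₁}² + ∂_{x₂}²` on `ℝ²`. -/
def lap (ψ : ℝ × ℝ → ℝ) : ℝ × ℝ → ℝ := fun p =>
  pd (1, 0) (pd (1, 0) ψ) p + pd (0, 1) (pd (0, 1) ψ) p

/-- The X-ray transform `Tψ(s,θ)`. -/
def xray (ψ : ℝ × ℝ → ℝ) (s θ : ℝ) : ℝ :=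
  ∫ t : ℝ, ψ (t * Real.cos θ - s * Real.sin θ, t * Real.sin θ + s * Real.cos θ)

/-- The Kohn–Nirenberg norm `‖ψ‖_{S¹₃}` is at most `C`. -/
def KNle (ψ : ℝ × ℝ → ℝ) (C : ℝ) : Prop :=
  ∀ γ₁ γ₂ : ℕ, γ₁ + γ₂ ≤ 3 → ∀ p : ℝ × ℝ,
    |Real.sqrt (1 + p.1 ^ 2 + p.2 ^ 2) ^ ((γ₁ + γ₂ : ℤ) - 1) *
      (pd (1, 0))^[γ₁] ((pd (0, 1))^[γ₂] ψ) p| ≤ C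

/-- The dyadic annulus `{2^{k−1} ≤ |x| ≤ 2^{k+1}}` in `ℝ²`. -/
def annulus (k : ℕ) : Set (ℝ × ℝ) :=
  {p | (2 : ℝ) ^ ((k : ℤ) - 1) ≤ Real.sqrt (p.1 ^ 2 + p.2 ^ 2) ∧
       Real.sqrt (p.1 ^ 2 + p.2 ^ 2) ≤ 2 ^ (k + 1)}

lemma contDiff_pd {ψ : ℝ × ℝ → ℝ} (h : ContDiff ℝ (⊤ : ℕ∞) ψ) (v : ℝ × ℝ) :
    ContDiff ℝ (⊤ : ℕ∞) (pd v ψ) :=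
  (h.fderiv_right (m := (⊤ : ℕ∞)) le_rfl).clm_apply contDiff_const

lemma contDiff_lap {ψ : ℝ × ℝ → ℝ} (h : ContDiff ℝ (⊤ : ℕ∞) ψ) :
    ContDiff ℝ (⊤ : ℕ∞) (lap ψ) :=
  (contDiff_pd (contDiff_pd h _) _).add (contDiff_pd (contDiff_pd h _) _)

lemma ContDiff.differentiable_of_infty {ψ : ℝ × ℝ → ℝ} (h : ContDiff ℝ (⊤ : ℕ∞) ψ) :
    Differentiable ℝ ψ :=
  h.differentiable (by simp)

lemma pd_comm {ψ : ℝ × ℝ → ℝ} (h : ContDiff ℝ (⊤ : ℕ∞) ψ) (v w : ℝ × ℝ) :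
    pd v (pd w ψ) = pd w (pd v ψ) := by
  funext p
  have hd : DifferentiableAt ℝ (fderiv ℝ ψ) p :=
    ((h.fderiv_right (m := (⊤ : ℕ∞)) le_rfl).differentiable (by simp)) p
  have key : ∀ a b : ℝ × ℝ, pd a (pd b ψ) p = fderiv ℝ (fderiv ℝ ψ) p a b := by
    intro a b
    unfold pd
    rw [fderiv_clm_apply hd (differentiableAt_const b)]
    simp
  rw [key, key]
  have two_le : (2 : WithTop ℕ∞) ≤ (⊤ : ℕ∞) := WithTop.coe_le_coe.2 (le_top : (2 : ℕ∞) ≤ ⊤)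
  exact (h.contDiffAt.isSymmSndFDerivAt (by simpa using two_le)) v w

lemma pd_add {φ ψ : ℝ × ℝ → ℝ} (hφ : Differentiable ℝ φ) (hψ : Differentiable ℝ ψ)
    (v : ℝ × ℝ) : pd v (fun p => φ p + ψ p) = fun p => pd v φ p + pd v ψ p := by
  funext p
  simp [pd, fderiv_fun_add (hφ p) (hψ p)]

lemma pd_sum {ι : Type*} (u : Finset ι) {f : ι → ℝ × ℝ → ℝ}
    (hf : ∀ i ∈ u, Differentiable ℝ (f i)) (v : ℝ × ℝ) :
    pd v (fun p => ∑ i ∈ u, f i p) = fun p => ∑ i ∈ u, pd v (f i) p := by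
  funext p
  simp [pd, fderiv_fun_sum (fun i hi => hf i hi p)]

lemma lap_sum {ι : Type*} (u : Finset ι) {f : ι → ℝ × ℝ → ℝ}
    (hf : ∀ i ∈ u, ContDiff ℝ (⊤ : ℕ∞) (f i)) :
    lap (fun p => ∑ i ∈ u, f i p) = fun p => ∑ i ∈ u, lap (f i) p := by
  have second : ∀ v, pd v (pd v fun p => ∑ i ∈ u, f i p) =
      fun p => ∑ i ∈ u, pd v (pd v (f i)) p := by
    intro v
    rw [pd_sum u (fun i hi => (hf i hi).differentiable_of_infty),
      pd_sum u (fun i hi => (contDiff_pd (hf i hi) v).differentiable_of_infty)]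
  funext p
  simp only [lap, second, Finset.sum_add_distrib]

lemma tsupport_pd_subset (v : ℝ × ℝ) (ψ : ℝ × ℝ → ℝ) : tsupport (pd v ψ) ⊆ tsupport ψ :=
  tsupport_fderiv_apply_subset ℝ v

lemma pd_eq_zero_of_notMem {ψ : ℝ × ℝ → ℝ} {p : ℝ × ℝ} (hp : p ∉ tsupport ψ) (v : ℝ × ℝ) :
    pd v ψ p = 0 :=
  image_eq_zero_of_notMem_tsupport fun h => hp (tsupport_pd_subset v ψ h)

lemma lap_eq_zero_of_notMem {ψ : ℝ × ℝ → ℝ} {p : ℝ × ℝ} (hp : p ∉ tsupport ψ) :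
    lap ψ p = 0 := by
  have h (v : ℝ × ℝ) : pd v (pd v ψ) p = 0 :=
    pd_eq_zero_of_notMem (fun h => hp (tsupport_pd_subset v ψ h)) v
  simp [lap, h]

lemma KNle.abs_third_pd_le {ψ : ℝ × ℝ → ℝ} {C : ℝ} (h : KNle ψ C) {k : ℕ}
    {p : ℝ × ℝ} (hp : p ∈ annulus (k + 1)) {i j : ℕ} (hij : i + j = 3) :
    |(pd (1, 0))^[i] ((pd (0, 1))^[j] ψ) p| ≤ C / 4 ^ k := by
  have h3 := h i j hij.le p
  have hz : ((i : ℤ) + j) - 1 = (2 : ℕ) := by omega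
  have hr : (2 : ℝ) ^ k ≤ √(p.1 ^ 2 + p.2 ^ 2) := by
    have := hp.1
    rwa [show (((k + 1 : ℕ) : ℤ) - 1) = (k : ℕ) by push_cast; ring, zpow_natCast] at this
  have hsq : (4 : ℝ) ^ k ≤ p.1 ^ 2 + p.2 ^ 2 := by
    have h1 := pow_le_pow_left₀ (by positivity) hr 2
    rw [Real.sq_sqrt (by positivity), ← pow_mul, mul_comm, pow_mul] at h1
    norm_num at h1
    exact h1
  rw [hz, zpow_natCast, Real.sq_sqrt (by positivity), abs_mul,
    abs_of_nonneg (by positivity)] at h3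
  rw [le_div_iff₀ (by positivity), mul_comm]
  refine le_trans ?_ h3
  gcongr
  linarith

/-- The gradient of the Laplacian of a dyadic piece is controlled by the third order part
of its Kohn–Nirenberg norm. -/
lemma abs_pd_lap_le {ψ : ℝ × ℝ → ℝ} {C : ℝ} (hC : 0 ≤ C) (hs : ContDiff ℝ (⊤ : ℕ∞) ψ)
    (h : KNle ψ C) {k : ℕ} (hsupp : tsupport ψ ⊆ annulus (k + 1)) (p : ℝ × ℝ) :
    |pd (1, 0) (lap ψ) p| ≤ 2 * (C / 4 ^ k) ∧ |pd (0, 1) (lap ψ) p| ≤ 2 * (C / 4 ^ k) := by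
  by_cases hp : p ∈ tsupport ψ
  · have b {i j : ℕ} (hij : i + j = 3) := h.abs_third_pd_le (hsupp hp) hij
    have b30 := b (i := 3) (j := 0) rfl
    have b21 := b (i := 2) (j := 1) rfl
    have b12 := b (i := 1) (j := 2) rfl
    have b03 := b (i := 0) (j := 3) rfl
    simp only [Function.iterate_succ, Function.iterate_zero, Function.comp_apply, id_eq]
      at b30 b21 b12 b03
    have split (v : ℝ × ℝ) : pd v (lap ψ) p =
        pd v (pd (1, 0) (pd (1, 0) ψ)) p + pd v (pd (0, 1) (pd (0, 1) ψ)) p :=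
      congrFun (pd_add (contDiff_pd (contDiff_pd hs _) _).differentiable_of_infty
        (contDiff_pd (contDiff_pd hs _) _).differentiable_of_infty v) p
    have comm : pd (0, 1) (pd (1, 0) (pd (1, 0) ψ)) = pd (1, 0) (pd (1, 0) (pd (0, 1) ψ)) := by
      rw [pd_comm (contDiff_pd hs _), pd_comm hs]
    rw [split, split, comm]
    exact ⟨(abs_add_le _ _).trans (by linarith), (abs_add_le _ _).trans (by linarith)⟩
  · have hp' : p ∉ tsupport (lap ψ) := fun hm => hp <| by
      refine closure_minimal (fun q hq => ?_) (isClosed_tsupport ψ) hm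
      by_contra hq'
      exact hq (lap_eq_zero_of_notMem hq')
    rw [pd_eq_zero_of_notMem hp', pd_eq_zero_of_notMem hp', abs_zero]
    exact ⟨by positivity, by positivity⟩

/-- The point with signed distance parameters `(t, s)` on the line of direction `θ`. -/
def linePoint (θ s t : ℝ) : ℝ × ℝ :=
  (t * Real.cos θ - s * Real.sin θ, t * Real.sin θ + s * Real.cos θ)

lemma linePoint_notMem_annulus {θ s t : ℝ} {k : ℕ}
    (h : (2 : ℝ) ^ (k + 2) < |s| ∨ (2 : ℝ) ^ (k + 2) < |t|) :
    linePoint θ s t ∉ annulus (k + 1) := by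
  rintro ⟨-, hle⟩
  have hn : (linePoint θ s t).1 ^ 2 + (linePoint θ s t).2 ^ 2 = t ^ 2 + s ^ 2 := by
    simp only [linePoint]
    linear_combination (t ^ 2 + s ^ 2) * Real.sin_sq_add_cos_sq θ
  rw [hn] at hle
  have hs : |s| ≤ √(t ^ 2 + s ^ 2) := Real.abs_le_sqrt (by nlinarith [sq_nonneg t])
  have ht : |t| ≤ √(t ^ 2 + s ^ 2) := Real.abs_le_sqrt (by nlinarith [sq_nonneg s])
  rcases h with h | h
  · exact absurd (h.trans_le (hs.trans hle)) (lt_irrefl _)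
  · exact absurd (h.trans_le (ht.trans hle)) (lt_irrefl _)

lemma lap_linePoint_eq_zero {ψ : ℝ × ℝ → ℝ} {θ s t : ℝ} {k : ℕ}
    (hsupp : tsupport ψ ⊆ annulus (k + 1))
    (h : (2 : ℝ) ^ (k + 2) < |s| ∨ (2 : ℝ) ^ (k + 2) < |t|) :
    lap ψ (linePoint θ s t) = 0 :=
  lap_eq_zero_of_notMem fun hm => linePoint_notMem_annulus h (hsupp hm)

lemma integrable_lap_linePoint {ψ : ℝ × ℝ → ℝ} {k : ℕ} (hs : ContDiff ℝ (⊤ : ℕ∞) ψ)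
    (hsupp : tsupport ψ ⊆ annulus (k + 1)) (s θ : ℝ) :
    Integrable fun t => lap ψ (linePoint θ s t) := by
  have hc : Continuous fun t => lap ψ (linePoint θ s t) :=
    (contDiff_lap hs).continuous.comp (by unfold linePoint; fun_prop)
  refine hc.integrable_of_hasCompactSupport <|
    HasCompactSupport.intro (K := Set.Icc (-2 ^ (k + 2)) (2 ^ (k + 2))) isCompact_Icc ?_
  intro t ht
  refine lap_linePoint_eq_zero hsupp (Or.inr ?_)
  contrapose! ht
  exact abs_le.mp ht

lemma xray_lap_eq_zero {ψ : ℝ × ℝ → ℝ} {s θ : ℝ} {k : ℕ}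
    (hsupp : tsupport ψ ⊆ annulus (k + 1)) (h : (2 : ℝ) ^ (k + 2) < |s|) :
    xray (lap ψ) s θ = 0 := by
  have : ∀ t, lap ψ (linePoint θ s t) = 0 := fun t => lap_linePoint_eq_zero hsupp (Or.inl h)
  simp only [linePoint] at this
  simp [xray, this]

lemma abs_lap_linePoint_sub_le {ψ : ℝ × ℝ → ℝ} {C : ℝ} (hC : 0 ≤ C)
    (hs : ContDiff ℝ (⊤ : ℕ∞) ψ) (h : KNle ψ C) {k : ℕ}
    (hsupp : tsupport ψ ⊆ annulus (k + 1)) (s θ t : ℝ) :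
    |lap ψ (linePoint θ s t) - lap ψ (linePoint θ 0 t)| ≤ 4 * (C / 4 ^ k) * |s| := by
  have hder (u : ℝ) : HasDerivAt (fun u => lap ψ (linePoint θ u t))
      (fderiv ℝ (lap ψ) (linePoint θ u t) (-Real.sin θ, Real.cos θ)) u := by
    refine ((contDiff_lap hs).differentiable_of_infty _).hasFDerivAt.comp_hasDerivAt u ?_
    have h1 := ((hasDerivAt_id u).mul_const (Real.sin θ)).const_sub (t * Real.cos θ)
    have h2 := ((hasDerivAt_id u).mul_const (Real.cos θ)).const_add (t * Real.sin θ)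
    simpa [linePoint] using h1.prodMk h2
  have hbound (u : ℝ) :
      ‖fderiv ℝ (lap ψ) (linePoint θ u t) (-Real.sin θ, Real.cos θ)‖ ≤ 4 * (C / 4 ^ k) := by
    have hv : ((-Real.sin θ, Real.cos θ) : ℝ × ℝ) =
        (-Real.sin θ) • ((1, 0) : ℝ × ℝ) + Real.cos θ • ((0, 1) : ℝ × ℝ) := by simp
    obtain ⟨h1, h2⟩ := abs_pd_lap_le hC hs h hsupp (linePoint θ u t)
    rw [hv, map_add, map_smul, map_smul, Real.norm_eq_abs]
    refine (abs_add_le _ _).trans ?_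
    rw [smul_eq_mul, smul_eq_mul, abs_mul, abs_mul, abs_neg]
    have a1 := mul_le_mul (Real.abs_sin_le_one θ) h1 (abs_nonneg _) zero_le_one
    have a2 := mul_le_mul (Real.abs_cos_le_one θ) h2 (abs_nonneg _) zero_le_one
    unfold pd at a1 a2
    linarith
  simpa using convex_univ.norm_image_sub_le_of_norm_hasDerivWithin_le
    (fun u _ => (hder u).hasDerivWithinAt) (fun u _ => hbound u)
    (Set.mem_univ (0 : ℝ)) (Set.mem_univ s)

lemma abs_xray_lap_sub_le {ψ : ℝ × ℝ → ℝ} {C : ℝ} (hC : 0 ≤ C)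
    (hs : ContDiff ℝ (⊤ : ℕ∞) ψ) (h : KNle ψ C) {k : ℕ}
    (hsupp : tsupport ψ ⊆ annulus (k + 1)) (s θ : ℝ) :
    |xray (lap ψ) s θ - xray (lap ψ) 0 θ| ≤ 32 * C * (|s| * (1 / 2) ^ k) := by
  have hsub : xray (lap ψ) s θ - xray (lap ψ) 0 θ =
      ∫ t, (lap ψ (linePoint θ s t) - lap ψ (linePoint θ 0 t)) :=
    (integral_sub (integrable_lap_linePoint hs hsupp s θ)
      (integrable_lap_linePoint hs hsupp 0 θ)).symm
  have hset : ∫ t, (lap ψ (linePoint θ s t) - lap ψ (linePoint θ 0 t)) =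
      ∫ t in Set.Icc (-2 ^ (k + 2) : ℝ) (2 ^ (k + 2)),
        (lap ψ (linePoint θ s t) - lap ψ (linePoint θ 0 t)) := by
    refine (setIntegral_eq_integral_of_forall_compl_eq_zero fun t ht => ?_).symm
    have ht' : (2 : ℝ) ^ (k + 2) < |t| := by
      contrapose! ht
      exact abs_le.mp ht
    rw [lap_linePoint_eq_zero hsupp (Or.inr ht'), lap_linePoint_eq_zero hsupp (Or.inr ht'),
      sub_zero]
  rw [hsub, hset, ← Real.norm_eq_abs]
  refine (norm_setIntegral_le_of_norm_le_const (C := 4 * (C / 4 ^ k) * |s|) ?_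
    (fun t _ => abs_lap_linePoint_sub_le hC hs h hsupp s θ t)).trans_eq ?_
  · simp
  · have h4 : (4 : ℝ) ^ k = 2 ^ k * 2 ^ k := by rw [← mul_pow]; norm_num
    rw [Real.volume_real_Icc_of_le (by linarith [show (0 : ℝ) < 2 ^ (k + 2) by positivity]),
      h4, one_div, inv_pow, pow_add]
    field_simp
    ring

lemma sum_dyadic_ite_le {s : ℝ} (N : ℕ) :
    (∑ k ∈ Finset.range N, if s ≤ (2 : ℝ) ^ (k + 2) then s * (1 / 2) ^ k else 0) ≤ 8 := by
  by_cases hs : s < 0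
  · refine (Finset.sum_nonpos fun k _ => ?_).trans (by norm_num : (0 : ℝ) ≤ 8)
    split_ifs
    · exact mul_nonpos_of_nonpos_of_nonneg hs.le (by positivity)
    · exact le_rfl
  push Not at hs
  suffices H : ∀ N : ℕ,
      (s ≤ (2 : ℝ) ^ (N + 2) →
        (∑ k ∈ Finset.range N, if s ≤ (2 : ℝ) ^ (k + 2) then s * (1 / 2) ^ k else 0)
          + 2 * (s * (1 / 2) ^ N) ≤ 8) ∧
      (¬ s ≤ (2 : ℝ) ^ (N + 2) →
        (∑ k ∈ Finset.range N, if s ≤ (2 : ℝ) ^ (k + 2) then s * (1 / 2) ^ k else 0) = 0) by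
    by_cases h : s ≤ (2 : ℝ) ^ (N + 2)
    · have := (H N).1 h
      have : 0 ≤ s * (1 / 2 : ℝ) ^ N := by positivity
      linarith
    · rw [(H N).2 h]
      norm_num
  intro N
  induction N with
  | zero =>
    refine ⟨fun h => ?_, fun _ => by simp⟩
    norm_num at h ⊢
    linarith
  | succ N ih =>
    rw [Finset.sum_range_succ, pow_succ (1 / 2 : ℝ) N]
    by_cases h : s ≤ (2 : ℝ) ^ (N + 2)
    · have h' : s ≤ (2 : ℝ) ^ (N + 1 + 2) :=
        h.trans (pow_le_pow_right₀ (by norm_num) (by omega))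
      refine ⟨fun _ => ?_, fun hn => absurd h' hn⟩
      rw [if_pos h]
      linarith [ih.1 h]
    · rw [if_neg h, ih.2 h]
      refine ⟨fun h1 => ?_, fun _ => by simp⟩
      have h2 := mul_le_mul_of_nonneg_right h1 (show (0 : ℝ) ≤ (1 / 2) ^ N by positivity)
      have h3 : (2 : ℝ) ^ (N + 1 + 2) * (1 / 2) ^ N = 8 := by
        rw [one_div, inv_pow, pow_add, pow_add]
        field_simp
        norm_num
      linarith

/-- There is a universal constant `K > 0` such that for any dyadic weight
`ω = Σ_{k≥1} ω_k` satisfying the support and regularity conditions,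
`|T(Δω)(s,θ) − Σ_{k≥1, 2^{k+1} ≥ |s|} T(Δω_k)(0,θ)| ≤ K C_reg`. -/
theorem xray_dyadic_comparison :
    ∃ K > (0:ℝ), ∀ Creg : ℝ, 0 ≤ Creg → ∀ ω : ℕ → ℝ × ℝ → ℝ,
      (∀ k, 1 ≤ k → ContDiff ℝ (⊤ : ℕ∞) (ω k)) →
      (∀ k, 1 ≤ k → HasCompactSupport (ω k)) →
      (∀ k, 1 ≤ k → ∀ p, ω k p ≤ 0) →
      (∃ N, ∀ k, N ≤ k → ω k = 0) →
      (∀ k, 1 ≤ k → tsupport (ω k) ⊆ annulus k) →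
      (∀ k, 1 ≤ k → KNle (ω k) Creg) →
      ∀ s θ : ℝ,
        |xray (lap (fun p => ∑' k : ℕ, ω (k + 1) p)) s θ -
          ∑' k : ℕ, (if |s| ≤ (2:ℝ) ^ (k + 2) then xray (lap (ω (k + 1))) 0 θ else 0)| ≤
        K * Creg := by
  refine ⟨256, by norm_num, ?_⟩
  rintro C hC ω hsm - - ⟨N, hN⟩ hsupp hKN s θ
  have sm (k : ℕ) := hsm (k + 1) (by omega)
  have supp (k : ℕ) := hsupp (k + 1) (by omega)
  have hzero (k : ℕ) (hk : k ∉ Finset.range N) : ω (k + 1) = 0 :=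
    hN _ (by rw [Finset.mem_range] at hk; omega)
  have hω : (fun p => ∑' k : ℕ, ω (k + 1) p) =
      fun p => ∑ k ∈ Finset.range N, ω (k + 1) p := by
    funext p
    exact tsum_eq_sum fun k hk => by rw [hzero k hk]; rfl
  have hlap0 : lap 0 = 0 := by
    funext p
    exact lap_eq_zero_of_notMem (by simp)
  have hx : xray (lap fun p => ∑ k ∈ Finset.range N, ω (k + 1) p) s θ =
      ∑ k ∈ Finset.range N, xray (lap (ω (k + 1))) s θ := by
    rw [lap_sum _ fun k _ => sm k]
    exact integral_finsetSum _ fun k _ => integrable_lap_linePoint (sm k) (supp k) s θ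
  rw [hω, hx, tsum_eq_sum (s := Finset.range N) (fun k hk => by
    rw [hzero k hk, hlap0]; simp [xray]), ← Finset.sum_sub_distrib]
  calc _ ≤ ∑ k ∈ Finset.range N, |xray (lap (ω (k + 1))) s θ -
          if |s| ≤ (2 : ℝ) ^ (k + 2) then xray (lap (ω (k + 1))) 0 θ else 0| :=
        Finset.abs_sum_le_sum_abs _ _
    _ ≤ ∑ k ∈ Finset.range N,
          32 * C * (if |s| ≤ (2 : ℝ) ^ (k + 2) then |s| * (1 / 2) ^ k else 0) := by
        refine Finset.sum_le_sum fun k _ => ?_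
        split_ifs with h
        · exact abs_xray_lap_sub_le hC (sm k) (hKN (k + 1) (by omega)) (supp k) s θ
        · rw [xray_lap_eq_zero (supp k) (not_le.mp h)]
          simp
    _ ≤ 32 * C * 8 := by
        rw [← Finset.mul_sum]
        exact mul_le_mul_of_nonneg_left (sum_dyadic_ite_le N) (by positivity)
    _ = 256 * C := by ring

end
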